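/- Let n ≥ 1 be an integer, θ ∈ (0, π/2) and 1 ≤ k ≤ n. If s is a smooth capillary function on C_θ with τ[s] > 0, then ∫_{C_θ} σ_k(τ[s])(ζ) · ζ_i dσ(ζ) = 0 for every i = 1,…,n. -/

import Mathlib

open MeasureTheory Real Set
open scoped RealInnerProductSpace

noncomputable section

abbrev V (n : ℕ) := EuclideanSpace ℝ (Fin (n + 1))

/-- The vertical unit vector `E_{n+1}`. -/
def Etop (n : ℕ) : V n := EuclideanSpace.single (Fin.last n) 1

/-- The spherical cap `S^n_θ`. -/
def sphCap (n : ℕ) (θ : ℝ) : Set (V n) :=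
  {u | ‖u‖ = 1 ∧ Real.cos θ ≤ u (Fin.last n)}

/-- The boundary circle `∂S^n_θ`. -/
def sphCapBdry (n : ℕ) (θ : ℝ) : Set (V n) :=
  {u | ‖u‖ = 1 ∧ u (Fin.last n) = Real.cos θ}

/-- The capillary cap `C_θ`. -/
def capCap (n : ℕ) (θ : ℝ) : Set (V n) :=
  {ζ | 0 ≤ ζ (Fin.last n) ∧ ‖ζ + Real.cos θ • Etop n‖ = 1}

/-- The open cone over `S^n_θ`. -/
def coneCap (n : ℕ) (θ : ℝ) : Set (V n) :=
  {x | ∃ l : ℝ, 0 < l ∧ ∃ u ∈ sphCap n θ, x = l • u}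

/-- `G` is a positively 1-homogeneous extension of `g : C_θ → ℝ` which is `C^m` on an
open neighborhood of the cone over `S^n_θ`. -/
def IsHomExt (n : ℕ) (θ : ℝ) (m : ℕ∞) (g G : V n → ℝ) : Prop :=
  (∃ U : Set (V n), IsOpen U ∧ coneCap n θ ⊆ U ∧ ContDiffOn ℝ m G U) ∧
  (∀ l : ℝ, 0 < l → ∀ u ∈ sphCap n θ, G (l • u) = l * G u) ∧
  (∀ ζ ∈ capCap n θ, G (ζ + Real.cos θ • Etop n) = g ζ)

/-- The Hessian of `G` at `u` as a quadratic/bilinear form. -/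
def hessQ (n : ℕ) (G : V n → ℝ) (u v w : V n) : ℝ :=
  fderiv ℝ (fderiv ℝ G) u v w

/-- The Hessian matrix `D²G(u)` in the standard coordinates. -/
def hessM (n : ℕ) (G : V n → ℝ) (u : V n) : Matrix (Fin (n + 1)) (Fin (n + 1)) ℝ :=
  fun i j => fderiv ℝ (fderiv ℝ G) u (EuclideanSpace.single i 1) (EuclideanSpace.single j 1)

/-- `σ_j` of the eigenvalues of `D²G(u)` (via characteristic polynomial coefficients). -/
def sigmaElem (n : ℕ) (j : ℕ) (G : V n → ℝ) (u : V n) : ℝ :=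
  (-1 : ℝ) ^ j * ((hessM n G u).charpoly.coeff (n + 1 - j))

/-- `τ[g] ≥ 0` : the Hessian of the extension is positive semidefinite on `S^n_θ`. -/
def TauNonneg (n : ℕ) (θ : ℝ) (G : V n → ℝ) : Prop :=
  ∀ u ∈ sphCap n θ, ∀ v : V n, 0 ≤ hessQ n G u v v

/-- `τ[g] > 0`. -/
def TauPos (n : ℕ) (θ : ℝ) (G : V n → ℝ) : Prop :=
  TauNonneg n θ G ∧
  ∀ u ∈ sphCap n θ, ∀ v : V n, v ≠ 0 → ⟪v, u⟫ = 0 → 0 < hessQ n G u v v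

/-- Capillary (Robin) boundary condition: `∂_{n+1}G = 0` on `∂S^n_θ`. -/
def IsCapillaryF (n : ℕ) (θ : ℝ) (G : V n → ℝ) : Prop :=
  ∀ u ∈ sphCapBdry n θ, fderiv ℝ G u (Etop n) = 0

/-- Reflection negating the horizontal coordinates. -/
def horizNeg (n : ℕ) (ζ : V n) : V n := (2 * ζ (Fin.last n)) • Etop n - ζ

/-- Support function of a set. -/
def suppFn (n : ℕ) (K : Set (V n)) (u : V n) : ℝ := sSup ((fun y => ⟪u, y⟫) '' K)

/-- Relative interior (within the hyperplane `{x_{n+1}=0}`) of the base `K ∩ {x_{n+1}=0}`. -/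
def relintBase (n : ℕ) (K : Set (V n)) : Set (V n) :=
  {x | x (Fin.last n) = 0 ∧ ∃ ε > 0, ∀ y : V n, y (Fin.last n) = 0 → ‖y - x‖ < ε → y ∈ K}

/-- A `θ`-capillary convex body. -/
def IsCapBody (n : ℕ) (θ : ℝ) (K : Set (V n)) : Prop :=
  IsCompact K ∧ Convex ℝ K ∧ (interior K).Nonempty ∧
  (∀ x ∈ K, 0 ≤ x (Fin.last n)) ∧
  (∀ x ∈ K, 0 < x (Fin.last n) → ∀ u : V n, ‖u‖ = 1 → ⟪u, x⟫ = suppFn n K u →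
    Real.cos θ ≤ u (Fin.last n)) ∧
  (∀ v : V n, ‖v‖ = 1 → v (Fin.last n) = 0 →
    suppFn n K (Real.sin θ • v + Real.cos θ • Etop n) = Real.sin θ * suppFn n K v) ∧
  (relintBase n K).Nonempty

/-- `ψ` is one of `x²`, `x^p (p<0)`, `-log x`. -/
def PsiOK (ψ : ℝ → ℝ) : Prop :=
  (ψ = fun x : ℝ => x ^ 2) ∨ (∃ p : ℝ, p < 0 ∧ ψ = fun x : ℝ => x ^ p) ∨
    (ψ = fun x : ℝ => -Real.log x)

/-!
Extend `s` to a 1-homogeneous function `G` on the cone over the cap. For a weight `w` of compact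
support in `(0, ∞)`, the function `w (x_{n+1}) * cof_{n+1,i} (D²G)` is the Jacobian determinant of
the gradient map of `G` with two entries replaced, hence a divergence; on the boundary of the cone
the capillary condition `∂_{n+1} G = 0` kills the flux, so its integral over the cone vanishes.
Polar coordinates turn this into the vanishing of the integral of `u_{n+1}⁻¹ * cof_{n+1,i} (D²G)`
over the cap.

This applies to every `G + t ℓ`, where `ℓ` is the support function of `C_θ` and `D²ℓ(u)` is the
projection onto the tangent space at `u`. There the cofactor is `∑ j, σ_j t^(n-j) u_i u_{n+1}`,
and comparing powers of `t` separates the curvatures `σ_k`. The surface measure from polar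
coordinates is a multiple of the Hausdorff measure, as both are rotation invariant.
-/

section Development

open Filter Topology Metric
open scoped Matrix

theorem exists_mem_segment_inter_frontier {E : Type*} [AddCommGroup E] [Module ℝ E]
    [TopologicalSpace E] [IsTopologicalAddGroup E] [ContinuousSMul ℝ E] {K : Set E} {x y : E}
    (hx : x ∈ K) (hy : y ∉ K) : ∃ z ∈ segment ℝ x y, z ∈ frontier K := by
  by_contra! h
  have hcover : segment ℝ x y ⊆ interior K ∪ interior Kᶜ := fun z hz =>
    compl_frontier_eq_union_interior.subset (h z hz)
  have hyK := (convex_segment x y).isPreconnected.subset_left_of_subset_union isOpen_interior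
    isOpen_interior (disjoint_compl_right.mono interior_subset interior_subset) hcover
    ⟨x, left_mem_segment ℝ x y, (hcover (left_mem_segment ℝ x y)).resolve_right
      fun hx' => interior_subset hx' hx⟩ (right_mem_segment ℝ x y)
  exact hy (interior_subset hyK)

theorem lipschitzWith_indicator {E F : Type*} [SeminormedAddCommGroup E] [NormedSpace ℝ E]
    [SeminormedAddCommGroup F] {C : NNReal} {f : E → F} {K : Set E} (hf : LipschitzWith C f)
    (hK : ∀ x ∈ frontier K, f x = 0) : LipschitzWith C (K.indicator f) := by
  have cross : ∀ x ∈ K, ∀ y ∉ K, dist (f x) 0 ≤ C * dist x y := fun x hx y hy => by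
    obtain ⟨z, hz, hzK⟩ := exists_mem_segment_inter_frontier hx hy
    calc dist (f x) 0 = dist (f x) (f z) := by rw [hK z hzK]
      _ ≤ C * dist x z := hf.dist_le_mul x z
      _ ≤ C * dist x y := by
        gcongr
        linarith [dist_add_dist_of_mem_segment hz, dist_nonneg (x := z) (y := y)]
  refine LipschitzWith.of_dist_le_mul fun x y => ?_
  by_cases hx : x ∈ K <;> by_cases hy : y ∈ K
  · simpa [hx, hy] using hf.dist_le_mul x y
  · simpa [hx, hy] using cross x hx y hy
  · simpa [hx, hy, dist_comm] using cross y hy x hx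
  · simp only [indicator_of_notMem, hx, hy, not_false_eq_true, dist_self]
    positivity

section Divergence

variable {E : Type*} [NormedAddCommGroup E] [NormedSpace ℝ E] [FiniteDimensional ℝ E]
  [MeasurableSpace E] [BorelSpace E] (μ : Measure E) [μ.IsAddHaarMeasure]

theorem integral_lineDeriv_eq_zero {C : NNReal} {f : E → ℝ} (hf : LipschitzWith C f)
    (hfc : HasCompactSupport f) (v : E) : ∫ x, lineDeriv ℝ f x v ∂μ = 0 := by
  simpa [lineDeriv] using (LipschitzWith.integral_lineDeriv_mul_eq (μ := μ)
    (LipschitzWith.const (1 : ℝ)) hf hfc (-v)).symm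

theorem setIntegral_fderiv_eq_zero {f : E → ℝ} {K : Set E} (hf : ContDiff ℝ 1 f)
    (hfc : HasCompactSupport f) (hμK : μ (frontier K) = 0) (hfK : ∀ x ∈ frontier K, f x = 0)
    (v : E) : ∫ x in K, fderiv ℝ f x v ∂μ = 0 := by
  obtain ⟨C, hC⟩ := hf.lipschitzWith_of_hasCompactSupport hfc one_ne_zero
  have hsupp : HasCompactSupport (K.indicator f) :=
    hfc.mono (by simp [inter_subset_right])
  rw [← integral_indicator₀ (nullMeasurableSet_of_null_frontier hμK),
    ← integral_lineDeriv_eq_zero μ (lipschitzWith_indicator hC hfK) hsupp v]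
  refine integral_congr_ae ?_
  filter_upwards [measure_eq_zero_iff_ae_notMem.1 hμK] with x hx
  rcases compl_frontier_eq_union_interior.subset hx with hxK | hxK
  · have hloc : K.indicator f =ᶠ[𝓝 x] f :=
      (eqOn_indicator (s := K)).eventuallyEq_of_mem (mem_interior_iff_mem_nhds.1 hxK)
    rw [indicator_of_mem (interior_subset hxK), hloc.lineDeriv_eq,
      (hf.differentiable one_ne_zero x).lineDeriv_eq_fderiv]
  · have hloc : K.indicator f =ᶠ[𝓝 x] 0 :=
      (eqOn_indicator' (s := K)).eventuallyEq_of_mem (mem_interior_iff_mem_nhds.1 hxK)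
    rw [indicator_of_notMem (interior_subset hxK), hloc.lineDeriv_eq]
    simp [lineDeriv]

end Divergence

section NullLagrangian

variable {ι : Type*} [Fintype ι] [DecidableEq ι]

theorem contDiff_matrix_det {E : Type*} [NormedAddCommGroup E] [NormedSpace ℝ E]
    {m : WithTop ℕ∞} {A : E → Matrix ι ι ℝ} (hA : ∀ i j, ContDiff ℝ m fun x => A x i j) :
    ContDiff ℝ m fun x => (A x).det := by
  simp only [Matrix.det_apply]
  exact ContDiff.sum fun σ _ => (contDiff_prod fun i _ => hA _ _).const_smul _

theorem contDiff_matrix_adjugate {E : Type*} [NormedAddCommGroup E] [NormedSpace ℝ E]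
    {m : WithTop ℕ∞} {A : E → Matrix ι ι ℝ} (hA : ∀ i j, ContDiff ℝ m fun x => A x i j)
    (i j : ι) : ContDiff ℝ m fun x => (A x).adjugate i j := by
  simp only [Matrix.adjugate_apply]
  refine contDiff_matrix_det fun a b => ?_
  by_cases ha : a = j
  · simpa [Matrix.updateRow_apply, ha] using contDiff_const
  · simpa [Matrix.updateRow_apply, ha] using hA a b

theorem fderiv_matrix_det {E : Type*} [NormedAddCommGroup E] [NormedSpace ℝ E]
    {A : E → Matrix ι ι ℝ} {x : E} (hA : ∀ i j, DifferentiableAt ℝ (fun y => A y i j) x) (v : E) :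
    fderiv ℝ (fun y => (A y).det) x v =
      ∑ b, ((A x).updateRow b fun c => fderiv ℝ (fun y => A y b c) x v).det := by
  let D : ContinuousMultilinearMap ℝ (fun _ : ι => ι → ℝ) ℝ :=
    { (Matrix.detRowAlternating (n := ι) (R := ℝ)).toMultilinearMap with
      cont := continuous_id.matrix_det (A := fun M : Matrix ι ι ℝ => M) }
  have hrow : ∀ b, HasFDerivAt (fun y => A y b)
      (ContinuousLinearMap.pi fun c => fderiv ℝ (fun y => A y b c) x) x :=
    fun b => hasFDerivAt_pi.2 fun c => (hA b c).hasFDerivAt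
  have hdet : HasFDerivAt (fun y => (A y).det) _ x := HasFDerivAt.multilinear_comp (f := D) hrow
  rw [hdet.fderiv, _root_.sum_apply]
  rfl

theorem det_updateRow_eq_sum {R : Type*} [CommRing R] (M : Matrix ι ι R) (b : ι) (v : ι → R) :
    (M.updateRow b v).det = ∑ c, v c * (M.updateRow b (Pi.single c 1)).det := by
  rw [← Matrix.cramer_transpose_apply, Matrix.cramer_eq_adjugate_mulVec,
    ← Matrix.adjugate_transpose]
  simp [Matrix.mulVec, dotProduct, Matrix.adjugate_apply, mul_comm]

theorem det_updateRow_updateRow_swap {R : Type*} [CommRing R] (M : Matrix ι ι R) {b l : ι}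
    (hbl : b ≠ l) (v w : ι → R) :
    ((M.updateRow l v).updateRow b w).det = -((M.updateRow l w).updateRow b v).det := by
  have hswap : (M.updateRow l v).updateRow b w =
      ((M.updateRow l w).updateRow b v).submatrix (Equiv.swap b l) id := by
    ext i j
    rcases eq_or_ne i b with rfl | hib
    · simp [hbl.symm]
    rcases eq_or_ne i l with rfl | hil
    · simp [hib]
    · simp [hib, hil, Equiv.swap_apply_of_ne_of_ne]
  simp [hswap, Matrix.det_permute, Equiv.Perm.sign_swap hbl]

theorem sum_det_updateRow_updateRow_eq_zero {R : Type*} [CommRing R] (M : Matrix ι ι R)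
    {S : Matrix ι ι R} (hS : S.IsSymm) {b l : ι} (hbl : b ≠ l) :
    ∑ a, ((M.updateRow l (Pi.single a 1)).updateRow b (S a)).det = 0 := by
  simp_rw [det_updateRow_eq_sum _ b (S _)]
  rw [← Fintype.sum_prod_type' fun a c =>
    S a c * ((M.updateRow l (Pi.single a 1)).updateRow b (Pi.single c 1)).det]
  refine Finset.sum_involution (fun p _ => p.swap) (fun p _ => ?_) (fun p _ hp hswap => hp ?_)
    (fun _ _ => Finset.mem_univ _) fun p _ => p.swap_swap
  · rw [det_updateRow_updateRow_swap M hbl, Prod.fst_swap, Prod.snd_swap, hS.apply]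
    ring
  · rw [show p.2 = p.1 from congrArg Prod.fst hswap,
      Matrix.det_zero_of_row_eq hbl (by ext; simp [Matrix.updateRow_apply, hbl.symm]), mul_zero]

/-- The Jacobian matrix of a family of scalar functions: row `b` is the gradient of `Φ b`. -/
def jacobianMatrix (Φ : ι → EuclideanSpace ℝ ι → ℝ) (x : EuclideanSpace ℝ ι) : Matrix ι ι ℝ :=
  Matrix.of fun b c => fderiv ℝ (Φ b) x (EuclideanSpace.single c 1)

variable {Φ : ι → EuclideanSpace ℝ ι → ℝ}

theorem contDiff_jacobianMatrix (hΦ : ∀ b, ContDiff ℝ 2 (Φ b)) (b c : ι) :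
    ContDiff ℝ 1 fun x => jacobianMatrix Φ x b c :=
  ((hΦ b).fderiv_right (m := 1) le_rfl).clm_apply contDiff_const

theorem sum_fderiv_adjugate_jacobianMatrix_eq_zero (hΦ : ∀ b, ContDiff ℝ 2 (Φ b)) (l : ι)
    (x : EuclideanSpace ℝ ι) :
    ∑ a, fderiv ℝ (fun y => (jacobianMatrix Φ y).adjugate a l) x
      (EuclideanSpace.single a 1) = 0 := by
  have hdiff : ∀ b c, DifferentiableAt ℝ (fun y => jacobianMatrix Φ y b c) x := fun b c =>
    (contDiff_jacobianMatrix hΦ b c).differentiable one_ne_zero x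
  have hrow : ∀ a b c, HasFDerivAt
      (fun y => (jacobianMatrix Φ y).updateRow l (Pi.single a 1) b c)
      (if b = l then 0 else fderiv ℝ (fun y => jacobianMatrix Φ y b c) x) x := fun a b c => by
    rcases eq_or_ne b l with rfl | hbl
    · simpa using hasFDerivAt_const _ _
    · simpa [hbl] using (hdiff b c).hasFDerivAt
  simp_rw [Matrix.adjugate_apply,
    fderiv_matrix_det fun b c => (hrow _ b c).differentiableAt, (hrow _ _ _).fderiv]
  rw [Finset.sum_comm]
  refine Finset.sum_eq_zero fun b _ => ?_
  rcases eq_or_ne b l with rfl | hbl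
  · exact Finset.sum_eq_zero fun a _ => Matrix.det_eq_zero_of_row_eq_zero b (by simp)
  · have hsymm : (Matrix.of fun a c => fderiv ℝ (fun y => jacobianMatrix Φ y b c) x
        (EuclideanSpace.single a 1)).IsSymm := by
      have hfd := ((hΦ b).fderiv_right (m := 1) le_rfl).differentiable one_ne_zero x
      have hS := (hΦ b).contDiffAt.isSymmSndFDerivAt (x := x) (by simp)
      ext a c
      simpa [jacobianMatrix, fderiv_clm_apply hfd (differentiableAt_const _)] using hS _ _
    simp only [if_neg hbl]
    exact sum_det_updateRow_updateRow_eq_zero (jacobianMatrix Φ x) hsymm hbl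

theorem setIntegral_det_jacobianMatrix_eq_zero (hΦ : ∀ b, ContDiff ℝ 2 (Φ b)) {l : ι}
    (hl : HasCompactSupport (Φ l)) {K : Set (EuclideanSpace ℝ ι)} (hK : volume (frontier K) = 0)
    (hlK : ∀ x ∈ frontier K, Φ l x = 0) : ∫ x in K, (jacobianMatrix Φ x).det = 0 := by
  have hadj : ∀ a, ContDiff ℝ 1 fun x => (jacobianMatrix Φ x).adjugate a l := fun a =>
    contDiff_matrix_adjugate (contDiff_jacobianMatrix hΦ) a l
  have hflux : ∀ a, ContDiff ℝ 1 fun x => Φ l x * (jacobianMatrix Φ x).adjugate a l := fun a =>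
    ((hΦ l).of_le one_le_two).mul (hadj a)
  have hdiv : ∀ x, (jacobianMatrix Φ x).det = ∑ a, fderiv ℝ
      (fun y => Φ l y * (jacobianMatrix Φ y).adjugate a l) x (EuclideanSpace.single a 1) := by
    intro x
    have hterm : ∀ a, fderiv ℝ (fun y => Φ l y * (jacobianMatrix Φ y).adjugate a l) x
        (EuclideanSpace.single a 1) = Φ l x * fderiv ℝ
          (fun y => (jacobianMatrix Φ y).adjugate a l) x (EuclideanSpace.single a 1) +
        jacobianMatrix Φ x l a * (jacobianMatrix Φ x).adjugate a l := fun a => by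
      rw [fderiv_fun_mul ((hΦ l).differentiable two_ne_zero x)
        ((hadj a).differentiable one_ne_zero x)]
      simp [jacobianMatrix, mul_comm]
    simp_rw [hterm]
    rw [Finset.sum_add_distrib, ← Finset.mul_sum, sum_fderiv_adjugate_jacobianMatrix_eq_zero hΦ,
      mul_zero, zero_add, Matrix.det_eq_sum_mul_adjugate_row _ l]
  simp_rw [hdiv]
  rw [integral_finsetSum _ fun a _ => ?_]
  · exact Finset.sum_eq_zero fun a _ => setIntegral_fderiv_eq_zero volume (hflux a) hl.mul_right hK
      (fun x hx => by rw [hlK x hx, zero_mul]) _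
  · exact ((((hflux a).continuous_fderiv one_ne_zero).clm_apply
      continuous_const).integrable_of_hasCompactSupport
        (hl.mul_right.fderiv_apply ℝ _)).integrableOn

end NullLagrangian

section RankOne

open Matrix

variable {ι : Type*} [Fintype ι] [DecidableEq ι]

theorem adjugate_one_sub_vecMulVec_self {u : ι → ℝ} (hu : u ⬝ᵥ u = 1) :
    (1 - vecMulVec u u).adjugate = vecMulVec u u := by
  have hdet : ∀ s : ℝ, (1 - s • vecMulVec u u).det = 1 - s := fun s => by
    have h := det_one_add_replicateCol_mul_replicateRow (ι := Unit) (-s • u) u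
    rw [← vecMulVec_eq, smul_vecMulVec, neg_smul, ← sub_eq_add_neg, dotProduct_smul, hu] at h
    simpa [sub_eq_add_neg] using h
  have hadj : ∀ s ∈ ({1}ᶜ : Set ℝ),
      (1 - s • vecMulVec u u).adjugate = (1 - s) • (1 : Matrix ι ι ℝ) + s • vecMulVec u u := by
    intro s hs
    have hmul : (1 - s • vecMulVec u u) * ((1 - s) • (1 : Matrix ι ι ℝ) + s • vecMulVec u u) =
        (1 - s) • 1 := by
      simp only [sub_mul, mul_add, one_mul, smul_mul_smul_comm, mul_one, vecMulVec_mul_vecMulVec,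
        hu, one_smul]
      module
    refine smul_right_injective _ (sub_ne_zero.2 (Ne.symm hs)) ?_
    calc (1 - s) • (1 - s • vecMulVec u u).adjugate
        = (1 - s • vecMulVec u u).adjugate * ((1 - s • vecMulVec u u) *
            ((1 - s) • (1 : Matrix ι ι ℝ) + s • vecMulVec u u)) := by rw [hmul]; simp
      _ = (1 - s) • ((1 - s) • (1 : Matrix ι ι ℝ) + s • vecMulVec u u) := by
        rw [← mul_assoc, adjugate_mul, hdet, smul_mul_assoc, one_mul]
  -- `1 - u uᵀ` itself is singular, so the formula is reached as the limit `s → 1`.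
  have hlim := congrFun (Continuous.ext_on (dense_compl_singleton (1 : ℝ))
    (Continuous.matrix_adjugate (by fun_prop)) (by fun_prop) hadj) 1
  simpa using hlim

theorem smul_adjugate_add_smul_one_sub_vecMulVec {M : Matrix ι ι ℝ} {u : ι → ℝ}
    (hu : u ⬝ᵥ u = 1) (hMu : M *ᵥ u = 0) (huM : u ᵥ* M = 0) (t : ℝ) :
    t • (M + t • (1 - vecMulVec u u)).adjugate = (M + t • 1).det • vecMulVec u u := by
  have hAu : (M + t • 1) *ᵥ u = t • u := by simp [add_mulVec, hMu, smul_mulVec]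
  have huA : u ᵥ* (M + t • 1) = t • u := by simp [vecMul_add, huM, vecMul_smul]
  have hfactor : M + t • (1 - vecMulVec u u) = (M + t • 1) * (1 - vecMulVec u u) := by
    rw [mul_sub, mul_vecMulVec, hAu, mul_one, smul_vecMulVec, smul_sub, add_sub_assoc]
  have hP : t • vecMulVec u u = vecMulVec u u * (M + t • 1) := by
    rw [vecMulVec_mul, huA, vecMulVec_smul]
  rw [hfactor, adjugate_mul_distrib, adjugate_one_sub_vecMulVec_self hu, ← smul_mul_assoc, hP,
    mul_assoc, mul_adjugate, mul_smul_comm, mul_one]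

theorem det_add_smul_one {R : Type*} [CommRing R] [Nontrivial R] (M : Matrix ι ι R) (t : R) :
    (M + t • 1).det = ∑ j ∈ Finset.range (Fintype.card ι + 1),
      (-1) ^ j * M.charpoly.coeff (Fintype.card ι - j) * t ^ (Fintype.card ι - j) := by
  have hneg : M + t • 1 = -(scalar ι (-t) - M) := by
    rw [scalar_apply, ← smul_one_eq_diagonal]
    module
  rw [hneg, det_neg, ← eval_charpoly, Polynomial.eval_eq_sum_range, charpoly_natDegree_eq_dim,
    ← Finset.sum_range_reflect, Finset.mul_sum]
  refine Finset.sum_congr rfl fun j hj => ?_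
  obtain ⟨m, hm⟩ := Nat.exists_eq_add_of_le (Nat.lt_succ_iff.1 (Finset.mem_range.1 hj))
  have hsign : ((-1 : R) ^ m) * (-1) ^ m = 1 := by rw [← mul_pow]; simp
  simp only [hm, Nat.add_sub_cancel, Nat.add_sub_cancel_left, neg_pow t, pow_add]
  linear_combination (-1) ^ j * M.charpoly.coeff m * t ^ m * hsign

end RankOne

section Homogeneous

/-- `f` is positively homogeneous of integer degree `k` at the points of `S`; the set `S` itself
need not be invariant under dilations. -/
def IsPosHomogeneousOn {E F : Type*} [SMul ℝ E] [SMul ℝ F] (k : ℤ) (f : E → F) (S : Set E) :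
    Prop :=
  ∀ r : ℝ, 0 < r → ∀ x ∈ S, f (r • x) = r ^ k • f x

namespace IsPosHomogeneousOn

variable {E F : Type*} [NormedAddCommGroup E] [NormedSpace ℝ E] [NormedAddCommGroup F]
  [NormedSpace ℝ F] {k : ℤ} {f : E → F} {S : Set E}

theorem fderiv_self (h : IsPosHomogeneousOn k f S) {x : E} (hx : x ∈ S)
    (hf : DifferentiableAt ℝ f x) : fderiv ℝ f x x = (k : ℝ) • f x := by
  have hray : HasDerivAt (fun r : ℝ => r • x) x 1 := by
    simpa using (hasDerivAt_id (1 : ℝ)).smul_const x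
  have hcomp : HasDerivAt (fun r : ℝ => f (r • x)) (fderiv ℝ f x x) 1 :=
    HasFDerivAt.comp_hasDerivAt 1 (by simpa using hf.hasFDerivAt) hray
  have hpow : HasDerivAt (fun r : ℝ => r ^ k • f x) ((k : ℝ) • f x) 1 := by
    simpa using (hasDerivAt_zpow k (1 : ℝ) (Or.inl one_ne_zero)).smul_const (f x)
  refine hcomp.unique (hpow.congr_of_eventuallyEq ?_)
  filter_upwards [Ioi_mem_nhds zero_lt_one] with r hr using h r hr x hx

protected theorem fderiv (h : IsPosHomogeneousOn k f S) (hS : UniqueDiffOn ℝ S)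
    (hsmul : ∀ r : ℝ, 0 < r → ∀ x ∈ S, r • x ∈ S) (hf : ∀ x ∈ S, DifferentiableAt ℝ f x) :
    IsPosHomogeneousOn (k - 1) (fderiv ℝ f) S := by
  intro r hr x hx
  have hcomp : HasFDerivAt (fun y => f (r • y)) (r • fderiv ℝ f (r • x)) x := by
    simpa [Function.comp_def] using
      (hf _ (hsmul r hr x hx)).hasFDerivAt.comp x ((hasFDerivAt_id x).const_smul r)
  have hpow : HasFDerivAt (fun y => r ^ k • f y) (r ^ k • fderiv ℝ f x) x :=
    (hf x hx).hasFDerivAt.const_smul (r ^ k)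
  have heq : r • fderiv ℝ f (r • x) = r ^ k • fderiv ℝ f x :=
    (hS x hx).eq (hcomp.hasFDerivWithinAt.congr (fun y hy => (h r hr y hy).symm) (h r hr x hx).symm)
      hpow.hasFDerivWithinAt
  rw [zpow_sub_one₀ hr.ne', mul_comm, mul_smul, ← heq, inv_smul_smul₀ hr.ne']

end IsPosHomogeneousOn

end Homogeneous

section Norm

variable {E : Type*} [NormedAddCommGroup E] [InnerProductSpace ℝ E]

theorem hasFDerivAt_norm_of_ne_zero {x : E} (hx : x ≠ 0) :
    HasFDerivAt (fun y : E => ‖y‖) (‖x‖⁻¹ • innerSL ℝ x) x := by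
  have hsqrt := (hasStrictFDerivAt_norm_sq x).hasFDerivAt.sqrt
    (pow_ne_zero 2 (norm_ne_zero_iff.2 hx))
  simp only [Real.sqrt_sq (norm_nonneg _)] at hsqrt
  refine hsqrt.congr_fderiv ?_
  ext v
  simp only [smul_apply, nsmul_eq_mul, smul_eq_mul, one_div, mul_inv,
    Nat.cast_ofNat, innerSL_apply_apply]
  ring

theorem fderiv_fderiv_norm_apply {u : E} (hu : ‖u‖ = 1) (v w : E) :
    fderiv ℝ (fderiv ℝ fun x : E => ‖x‖) u v w = ⟪v, w⟫ - ⟪u, v⟫ * ⟪u, w⟫ := by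
  have hu0 : u ≠ 0 := norm_ne_zero_iff.1 (by simp [hu])
  have hfd : fderiv ℝ (fun x : E => ‖x‖) =ᶠ[𝓝 u] fun x => ‖x‖⁻¹ • innerSL ℝ x := by
    filter_upwards [isOpen_ne.mem_nhds hu0] with x hx
    exact (hasFDerivAt_norm_of_ne_zero hx).fderiv
  have hinv : HasFDerivAt (fun x : E => ‖x‖⁻¹) (-innerSL ℝ u) u := by
    simpa [hu, Function.comp_def] using
      (hasDerivAt_inv (x := ‖u‖) (by simp [hu])).comp_hasFDerivAt u
      (hasFDerivAt_norm_of_ne_zero hu0)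
  have hinner : HasFDerivAt (fun x : E => innerSL ℝ x) (innerSL ℝ : E →L[ℝ] E →L[ℝ] ℝ) u :=
    (innerSL ℝ : E →L[ℝ] E →L[ℝ] ℝ).hasFDerivAt
  rw [hfd.fderiv_eq, (hinv.fun_smul hinner).fderiv]
  simp [hu, sub_eq_add_neg, show innerSL ℝ v w = ⟪v, w⟫ from rfl]

end Norm

section Polar

theorem integral_volumeIoiPow (k : ℕ) (f : ℝ → ℝ) :
    ∫ r : Ioi (0 : ℝ), f r ∂(Measure.volumeIoiPow k) = ∫ r in Ioi (0 : ℝ), r ^ k * f r := by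
  simp only [Measure.volumeIoiPow, ENNReal.ofReal]
  rw [integral_withDensity_eq_integral_smul (measurable_subtype_coe.pow_const _).real_toNNReal,
    integral_subtype_comap measurableSet_Ioi fun r : ℝ => (r ^ k).toNNReal • f r]
  refine setIntegral_congr_fun measurableSet_Ioi fun r hr => ?_
  simp only [NNReal.smul_def, coe_toNNReal _ (pow_nonneg (le_of_lt hr) k), smul_eq_mul]

variable {E : Type*} [NormedAddCommGroup E] [NormedSpace ℝ E] [FiniteDimensional ℝ E]
  [Nontrivial E] [MeasurableSpace E] [BorelSpace E] (μ : Measure E) [μ.IsAddHaarMeasure]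

theorem integral_eq_integral_toSphere_integral_Ioi {f : E → ℝ} (hf : Integrable f μ) :
    ∫ x, f x ∂μ = ∫ u : sphere (0 : E) 1,
      (∫ r in Ioi (0 : ℝ), r ^ (Module.finrank ℝ E - 1) * f (r • (u : E))) ∂μ.toSphere := by
  let polar := homeomorphUnitSphereProd E
  have hpolar : ∀ x, f ((polar x).2.1 • ((polar x).1 : E)) = f x := fun x =>
    congrArg (fun y : ({0}ᶜ : Set E) => f y) (polar.symm_apply_apply x)
  have hmp := μ.measurePreserving_homeomorphUnitSphereProd
  have hint : Integrable (fun p : sphere (0 : E) 1 × Ioi (0 : ℝ) => f (p.2.1 • (p.1 : E)))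
      (μ.toSphere.prod (.volumeIoiPow (Module.finrank ℝ E - 1))) := by
    rw [← hmp.integrable_comp_emb polar.measurableEmbedding]
    exact ((integrableOn_iff_comap_subtypeVal (measurableSet_singleton _).compl).1
      hf.integrableOn).congr (ae_of_all _ fun x => (hpolar x).symm)
  calc ∫ x, f x ∂μ = ∫ x : ({0}ᶜ : Set E), f x ∂(μ.comap (↑)) := by
        rw [integral_subtype_comap (measurableSet_singleton _).compl f, restrict_compl_singleton]
    _ = ∫ p : sphere (0 : E) 1 × Ioi (0 : ℝ), f (p.2.1 • (p.1 : E))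
          ∂(μ.toSphere.prod (.volumeIoiPow (Module.finrank ℝ E - 1))) := by
        rw [← hmp.integral_comp polar.measurableEmbedding]
        exact integral_congr_ae (ae_of_all _ fun x => (hpolar x).symm)
    _ = _ := by
        rw [integral_prod _ hint]
        exact integral_congr_ae (ae_of_all _ fun u =>
          integral_volumeIoiPow _ fun r => f (r • (u : E)))

theorem setIntegral_mul_eq_integral_Ioi_mul_setIntegral_toSphere {K : Set E} {f : E → ℝ}
    (hK : MeasurableSet K) (hsmul : ∀ r : ℝ, 0 < r → ∀ x, r • x ∈ K ↔ x ∈ K)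
    (hf : IsPosHomogeneousOn (-(Module.finrank ℝ E - 1 : ℕ)) f K) {φ : E →L[ℝ] ℝ}
    (hφ : ∀ x ∈ K, 0 < φ x) {w : ℝ → ℝ} (hint : IntegrableOn (fun x => w (φ x) * f x) K μ) :
    ∫ x in K, w (φ x) * f x ∂μ = (∫ y in Ioi (0 : ℝ), w y) *
      ∫ u : sphere (0 : E) 1 in (↑) ⁻¹' K, (φ u)⁻¹ * f u ∂μ.toSphere := by
  have hfiber : ∀ u : sphere (0 : E) 1, (∫ r in Ioi (0 : ℝ), r ^ (Module.finrank ℝ E - 1) *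
      K.indicator (fun x => w (φ x) * f x) (r • (u : E))) =
      ((↑) ⁻¹' K : Set (sphere (0 : E) 1)).indicator
        (fun u => (∫ y in Ioi (0 : ℝ), w y) * ((φ u)⁻¹ * f u)) u := by
    intro u
    by_cases hu : (u : E) ∈ K
    · have hray : ∀ r ∈ Ioi (0 : ℝ), r ^ (Module.finrank ℝ E - 1) *
          K.indicator (fun x => w (φ x) * f x) (r • (u : E)) = w (r * φ u) * f u := by
        intro r hr
        have hpow : r ^ (Module.finrank ℝ E - 1) ≠ 0 := (pow_pos hr _).ne'
        rw [indicator_of_mem ((hsmul r hr _).2 hu), hf r hr u hu, zpow_neg, zpow_natCast, map_smul,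
          smul_eq_mul, smul_eq_mul]
        field_simp
      rw [setIntegral_congr_fun measurableSet_Ioi hray, integral_mul_const,
        integral_comp_mul_right_Ioi w 0 (hφ u hu), indicator_of_mem (mem_preimage.2 hu), zero_mul,
        smul_eq_mul]
      ring
    · rw [indicator_of_notMem (by simpa using hu)]
      refine setIntegral_eq_zero_of_forall_eq_zero fun r hr => ?_
      rw [indicator_of_notMem (by simpa [hsmul r hr] using hu), mul_zero]
  rw [← integral_indicator hK,
    integral_eq_integral_toSphere_integral_Ioi μ (hint.integrable_indicator hK),
    integral_congr_ae (ae_of_all _ hfiber), integral_indicator (measurable_subtype_coe hK),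
    integral_const_mul]

end Polar

section Cone

variable {n : ℕ} {θ : ℝ}

theorem mem_coneCap_iff {x : V n} :
    x ∈ coneCap n θ ↔ x ≠ 0 ∧ cos θ * ‖x‖ ≤ x (Fin.last n) := by
  constructor
  · rintro ⟨l, hl, u, ⟨hu, hul⟩, rfl⟩
    refine ⟨smul_ne_zero hl.ne' (norm_ne_zero_iff.1 (by simp [hu])), ?_⟩
    simpa [norm_smul, hu, abs_of_pos hl, mul_comm] using mul_le_mul_of_nonneg_left hul hl.le
  · rintro ⟨hx, hxl⟩
    have hpos : 0 < ‖x‖ := norm_pos_iff.2 hx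
    refine ⟨‖x‖, hpos, ‖x‖⁻¹ • x, ⟨norm_smul_inv_norm hx, ?_⟩, (smul_inv_smul₀ hpos.ne' x).symm⟩
    rwa [PiLp.smul_apply, smul_eq_mul, ← div_eq_inv_mul, le_div_iff₀ hpos]

theorem mem_sphCap_iff {u : V n} : u ∈ sphCap n θ ↔ ‖u‖ = 1 ∧ u ∈ coneCap n θ := by
  refine and_congr_right fun hu => ?_
  rw [mem_coneCap_iff, hu, mul_one]
  exact (and_iff_right (norm_ne_zero_iff.1 (by simp [hu]))).symm

theorem smul_mem_coneCap_iff {r : ℝ} (hr : 0 < r) {x : V n} :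
    r • x ∈ coneCap n θ ↔ x ∈ coneCap n θ := by
  have hscale : cos θ * (r * ‖x‖) ≤ r * x (Fin.last n) ↔ cos θ * ‖x‖ ≤ x (Fin.last n) := by
    rw [mul_left_comm, mul_le_mul_iff_right₀ hr]
  simp [mem_coneCap_iff, norm_smul, abs_of_pos hr, hr.ne', hscale]

theorem last_pos_of_mem_coneCap (hθ : 0 < cos θ) {x : V n} (hx : x ∈ coneCap n θ) :
    0 < x (Fin.last n) :=
  (mul_pos hθ (norm_pos_iff.2 (mem_coneCap_iff.1 hx).1)).trans_le (mem_coneCap_iff.1 hx).2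

theorem convex_coneCap (hθ : 0 < cos θ) : Convex ℝ (coneCap n θ) := by
  have heq : coneCap n θ =
      {x | 0 < x (Fin.last n)} ∩ {x | cos θ * ‖x‖ - x (Fin.last n) ≤ 0} := by
    ext x
    refine ⟨fun hx => ⟨last_pos_of_mem_coneCap hθ hx, sub_nonpos.2 (mem_coneCap_iff.1 hx).2⟩,
      fun hx => mem_coneCap_iff.2 ⟨?_, sub_nonpos.1 hx.2⟩⟩
    rintro rfl
    exact lt_irrefl (0 : ℝ) hx.1
  let last : V n →ₗ[ℝ] ℝ := (EuclideanSpace.proj (Fin.last n) : V n →L[ℝ] ℝ)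
  have hnorm : ConvexOn ℝ univ fun x : V n => cos θ * ‖x‖ := convexOn_univ_norm.smul hθ.le
  have hle := (hnorm.sub (last.concaveOn convex_univ)).convex_le 0
  rw [sep_univ] at hle
  rw [heq]
  exact (convex_halfSpace_gt last.isLinear 0).inter hle

theorem measurableSet_coneCap : MeasurableSet (coneCap n θ) := by
  have heq : coneCap n θ = {0}ᶜ ∩ {x | cos θ * ‖x‖ ≤ x (Fin.last n)} :=
    ext fun x => mem_coneCap_iff
  rw [heq]
  exact (measurableSet_singleton 0).compl.inter
    (measurableSet_le (by fun_prop) (by fun_prop))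

theorem mem_interior_coneCap {x : V n} (hx : cos θ * ‖x‖ < x (Fin.last n)) :
    x ∈ interior (coneCap n θ) := by
  have hopen : IsOpen {y : V n | cos θ * ‖y‖ < y (Fin.last n)} :=
    isOpen_lt (by fun_prop) (by fun_prop)
  refine mem_interior.2 ⟨_, fun y (hy : _ < _) => mem_coneCap_iff.2 ⟨?_, hy.le⟩, hopen, hx⟩
  rintro rfl
  simp at hy

theorem cos_mul_norm_eq_of_mem_frontier_coneCap {x : V n} (hx : x ∈ frontier (coneCap n θ)) :
    cos θ * ‖x‖ = x (Fin.last n) := by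
  have hclosed : IsClosed {y : V n | cos θ * ‖y‖ ≤ y (Fin.last n)} :=
    isClosed_le (by fun_prop) (by fun_prop)
  have hle : cos θ * ‖x‖ ≤ x (Fin.last n) :=
    closure_minimal (fun y hy => (mem_coneCap_iff.1 hy).2) hclosed hx.1
  exact hle.eq_of_not_lt fun hlt => hx.2 (mem_interior_coneCap hlt)

theorem uniqueDiffOn_coneCap (hθ : 0 < cos θ) (hθ1 : cos θ < 1) :
    UniqueDiffOn ℝ (coneCap n θ) :=
  uniqueDiffOn_convex (convex_coneCap hθ) ⟨Etop n, mem_interior_coneCap (by simpa [Etop])⟩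

theorem isCompact_coneCap_inter_last_mem_Icc (hθ : 0 < cos θ) {a b : ℝ} (ha : 0 < a) :
    IsCompact (coneCap n θ ∩ {x | x (Fin.last n) ∈ Icc a b}) := by
  have heq : coneCap n θ ∩ {x | x (Fin.last n) ∈ Icc a b} =
      {x | cos θ * ‖x‖ ≤ x (Fin.last n)} ∩ {x | x (Fin.last n) ∈ Icc a b} := by
    ext x
    refine ⟨fun hx => ⟨(mem_coneCap_iff.1 hx.1).2, hx.2⟩,
      fun hx => ⟨mem_coneCap_iff.2 ⟨?_, hx.1⟩, hx.2⟩⟩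
    rintro rfl
    exact ha.not_ge hx.2.1
  rw [heq]
  refine isCompact_of_isClosed_isBounded ?_ ?_
  · exact (isClosed_le (by fun_prop) (by fun_prop)).inter (isClosed_Icc.preimage (by fun_prop))
  · refine (isBounded_iff_forall_norm_le).2 ⟨b / cos θ, fun x hx => ?_⟩
    rw [le_div_iff₀' hθ]
    exact hx.1.trans hx.2.2

end Cone

section Capillary

variable {n : ℕ} {θ : ℝ} {F G : V n → ℝ}

/-- A capillary function, given directly by its 1-homogeneous extension `F` to the cone over
`S^n_θ`; class `C³` suffices because only the Hessian of `F` is ever differentiated. -/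
structure IsCapillaryHom (n : ℕ) (θ : ℝ) (F : V n → ℝ) : Prop where
  contDiffAt : ∀ x ∈ coneCap n θ, ContDiffAt ℝ 3 F x
  homogeneous : IsPosHomogeneousOn 1 F (coneCap n θ)
  capillary : IsCapillaryF n θ F

theorem IsHomExt.isCapillaryHom {s : V n → ℝ} (hs : IsHomExt n θ 3 s G)
    (hcap : IsCapillaryF n θ G) : IsCapillaryHom n θ G where
  contDiffAt x hx := by
    obtain ⟨U, hU, hKU, hG⟩ := hs.1
    exact hG.contDiffAt (hU.mem_nhds (hKU hx))
  homogeneous r hr x hx := by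
    obtain ⟨l, hl, u, hu, rfl⟩ := hx
    rw [smul_smul, hs.2.1 _ (mul_pos hr hl) u hu, hs.2.1 l hl u hu, zpow_one, smul_eq_mul,
      mul_assoc]
  capillary := hcap

theorem sphCapBdry_subset_coneCap : sphCapBdry n θ ⊆ coneCap n θ :=
  fun _ hu => (mem_sphCap_iff.1 ⟨hu.1, hu.2.ge⟩).2

theorem hessM_const_smul (F : V n → ℝ) (t : ℝ) (x : V n) :
    hessM n (t • F) x = t • hessM n F x := by
  ext i j
  simp only [hessM, fderiv_const_smul_field, Matrix.smul_apply]
  rw [fderiv_const_smul_field (f := fderiv ℝ F) t]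
  rfl

theorem vecMul_hessM_apply (F : V n → ℝ) (x v : V n) (j : Fin (n + 1)) :
    (v ᵥ* hessM n F x) j = fderiv ℝ (fderiv ℝ F) x v (EuclideanSpace.single j 1) := by
  conv_rhs => rw [← (EuclideanSpace.basisFun (Fin (n + 1)) ℝ).sum_repr v]
  simp [Matrix.vecMul, dotProduct, hessM]

namespace IsCapillaryHom

theorem differentiableAt (hF : IsCapillaryHom n θ F) {x : V n} (hx : x ∈ coneCap n θ) :
    DifferentiableAt ℝ F x :=
  (hF.contDiffAt x hx).differentiableAt (by norm_num)

theorem contDiffAt_fderiv (hF : IsCapillaryHom n θ F) {x : V n} (hx : x ∈ coneCap n θ) :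
    ContDiffAt ℝ 2 (fderiv ℝ F) x :=
  (hF.contDiffAt x hx).fderiv_right (by norm_num)

theorem contDiffAt_fderiv_fderiv (hF : IsCapillaryHom n θ F) {x : V n} (hx : x ∈ coneCap n θ) :
    ContDiffAt ℝ 1 (fderiv ℝ (fderiv ℝ F)) x :=
  (hF.contDiffAt_fderiv hx).fderiv_right (by norm_num)

theorem differentiableAt_fderiv (hF : IsCapillaryHom n θ F) {x : V n} (hx : x ∈ coneCap n θ) :
    DifferentiableAt ℝ (fderiv ℝ F) x :=
  (hF.contDiffAt_fderiv hx).differentiableAt (by norm_num)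

theorem add (hF : IsCapillaryHom n θ F) (hG : IsCapillaryHom n θ G) :
    IsCapillaryHom n θ (F + G) where
  contDiffAt x hx := (hF.contDiffAt x hx).add (hG.contDiffAt x hx)
  homogeneous r hr x hx := by
    simp [hF.homogeneous r hr x hx, hG.homogeneous r hr x hx, mul_add]
  capillary u hu := by
    have hu' := sphCapBdry_subset_coneCap hu
    simp [fderiv_add (hF.differentiableAt hu') (hG.differentiableAt hu'), hF.capillary u hu,
      hG.capillary u hu]

theorem const_smul (hF : IsCapillaryHom n θ F) (t : ℝ) : IsCapillaryHom n θ (t • F) where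
  contDiffAt x hx := contDiffAt_const.smul (hF.contDiffAt x hx)
  homogeneous r hr x hx := by simp [hF.homogeneous r hr x hx, mul_left_comm]
  capillary u hu := by
    simp [fderiv_const_smul (hF.differentiableAt (sphCapBdry_subset_coneCap hu)),
      hF.capillary u hu]

theorem hessM_add (hF : IsCapillaryHom n θ F) (hG : IsCapillaryHom n θ G) {x : V n}
    (hx : x ∈ coneCap n θ) : hessM n (F + G) x = hessM n F x + hessM n G x := by
  have hfd : fderiv ℝ (F + G) =ᶠ[𝓝 x] fderiv ℝ F + fderiv ℝ G := by
    filter_upwards [(hF.contDiffAt x hx).eventually (by norm_num),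
      (hG.contDiffAt x hx).eventually (by norm_num)] with y hFy hGy
    exact fderiv_add (hFy.differentiableAt (by norm_num)) (hGy.differentiableAt (by norm_num))
  ext i j
  simp [hessM, hfd.fderiv_eq,
    fderiv_add (hF.differentiableAt_fderiv hx) (hG.differentiableAt_fderiv hx)]

theorem isSymm_hessM (hF : IsCapillaryHom n θ F) {x : V n} (hx : x ∈ coneCap n θ) :
    (hessM n F x).IsSymm := by
  ext i j
  exact ((hF.contDiffAt x hx).isSymmSndFDerivAt (by simp; norm_num)) _ _

theorem continuousOn_hessM (hF : IsCapillaryHom n θ F) :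
    ContinuousOn (hessM n F) (coneCap n θ) := by
  refine fun x hx => ContinuousAt.continuousWithinAt ?_
  have hcont := (hF.contDiffAt_fderiv_fderiv hx).continuousAt
  exact continuousAt_pi.2 fun i => continuousAt_pi.2 fun j =>
    (hcont.clm_apply continuousAt_const).clm_apply continuousAt_const

section Cone

variable (hF : IsCapillaryHom n θ F) (hθ : 0 < cos θ) (hθ1 : cos θ < 1)
include hF hθ hθ1

theorem fderiv_homogeneous : IsPosHomogeneousOn 0 (fderiv ℝ F) (coneCap n θ) :=
  hF.homogeneous.fderiv (uniqueDiffOn_coneCap hθ hθ1) (fun _ hr _ => (smul_mem_coneCap_iff hr).2)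
    fun _ => hF.differentiableAt

theorem hessM_homogeneous : IsPosHomogeneousOn (-1) (hessM n F) (coneCap n θ) := by
  intro r hr x hx
  have hhess := (hF.fderiv_homogeneous hθ hθ1).fderiv (uniqueDiffOn_coneCap hθ hθ1)
    (fun _ hr _ => (smul_mem_coneCap_iff hr).2) (fun _ => hF.differentiableAt_fderiv) r hr x hx
  ext i j
  simp [hessM, hhess]

theorem adjugate_hessM_homogeneous (i j : Fin (n + 1)) :
    IsPosHomogeneousOn (-n) (fun x => (hessM n F x).adjugate i j) (coneCap n θ) := by
  intro r hr x hx
  simp only [hF.hessM_homogeneous hθ hθ1 r hr x hx, Matrix.adjugate_smul]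
  simp

theorem vecMul_hessM_self {x : V n} (hx : x ∈ coneCap n θ) : x ᵥ* hessM n F x = 0 := by
  have hEuler : fderiv ℝ (fderiv ℝ F) x x = 0 := by
    simpa using (hF.fderiv_homogeneous hθ hθ1).fderiv_self hx (hF.differentiableAt_fderiv hx)
  ext j
  simp [vecMul_hessM_apply, hEuler]

theorem hessM_mulVec_self {x : V n} (hx : x ∈ coneCap n θ) : hessM n F x *ᵥ x = 0 := by
  rw [← Matrix.vecMul_transpose, hF.isSymm_hessM hx, hF.vecMul_hessM_self hθ hθ1 hx]

theorem fderiv_Etop_eq_zero {x : V n} (hx : x ∈ coneCap n θ)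
    (hxl : cos θ * ‖x‖ = x (Fin.last n)) : fderiv ℝ F x (Etop n) = 0 := by
  have hpos : 0 < ‖x‖ := norm_pos_iff.2 (mem_coneCap_iff.1 hx).1
  have hbdry : ‖x‖⁻¹ • x ∈ sphCapBdry n θ := by
    refine ⟨norm_smul_inv_norm (norm_pos_iff.1 hpos), ?_⟩
    rw [PiLp.smul_apply, ← hxl, smul_eq_mul, mul_comm, mul_inv_cancel_right₀ hpos.ne']
  have hzero := hF.capillary _ hbdry
  rwa [hF.fderiv_homogeneous hθ hθ1 _ (inv_pos.2 hpos) x hx, zpow_zero, one_smul] at hzero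

end Cone

end IsCapillaryHom

/-- The positively 1-homogeneous extension of the support function of the model cap `C_θ`; its
Hessian plays the role of the metric, so adding multiples of it produces all the `σ_k` at once. -/
def capSupport (n : ℕ) (θ : ℝ) (x : V n) : ℝ :=
  ‖x‖ - cos θ * x (Fin.last n)

theorem hasFDerivAt_capSupport {x : V n} (hx : x ≠ 0) : HasFDerivAt (capSupport n θ)
    (‖x‖⁻¹ • innerSL ℝ x - cos θ • (EuclideanSpace.proj (Fin.last n) : V n →L[ℝ] ℝ)) x :=
  (hasFDerivAt_norm_of_ne_zero hx).sub
    ((EuclideanSpace.proj (Fin.last n) : V n →L[ℝ] ℝ).hasFDerivAt.const_mul (cos θ))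

theorem isCapillaryHom_capSupport : IsCapillaryHom n θ (capSupport n θ) where
  contDiffAt x hx :=
    (contDiffAt_norm ℝ (mem_coneCap_iff.1 hx).1).sub
      (contDiffAt_const.mul (EuclideanSpace.proj (Fin.last n) : V n →L[ℝ] ℝ).contDiff.contDiffAt)
  homogeneous r hr x _ := by
    simp only [capSupport, norm_smul, Real.norm_of_nonneg hr.le, PiLp.smul_apply, smul_eq_mul,
      zpow_one]
    ring
  capillary u hu := by
    have hu0 : u ≠ 0 := norm_ne_zero_iff.1 (by simp [hu.1])
    rw [(hasFDerivAt_capSupport hu0).fderiv]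
    simp [Etop, hu.1, hu.2, EuclideanSpace.inner_single_right]

theorem hessM_capSupport {u : V n} (hu : ‖u‖ = 1) :
    hessM n (capSupport n θ) u = 1 - Matrix.vecMulVec u u := by
  have hu0 : u ≠ 0 := norm_ne_zero_iff.1 (by simp [hu])
  have hfd : fderiv ℝ (capSupport n θ) =ᶠ[𝓝 u] fun x => fderiv ℝ (fun y : V n => ‖y‖) x -
      cos θ • (EuclideanSpace.proj (Fin.last n) : V n →L[ℝ] ℝ) := by
    filter_upwards [isOpen_ne.mem_nhds hu0] with x hx
    rw [(hasFDerivAt_capSupport hx).fderiv, (hasFDerivAt_norm_of_ne_zero hx).fderiv]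
  ext i j
  rw [hessM, hfd.fderiv_eq, fderiv_sub_const, fderiv_fderiv_norm_apply hu]
  simp [Matrix.one_apply, Matrix.vecMulVec_apply, EuclideanSpace.inner_single_right, eq_comm]

end Capillary

open Manifold in
theorem exists_contDiff_hasCompactSupport_eventuallyEq {E : Type*} [NormedAddCommGroup E]
    [NormedSpace ℝ E] [FiniteDimensional ℝ E] {m : ℕ} {K : Set E} {f : E → ℝ} (hK : IsCompact K)
    (hf : ∀ x ∈ K, ContDiffAt ℝ m f x) :
    ∃ g : E → ℝ, ContDiff ℝ m g ∧ HasCompactSupport g ∧ ∀ x ∈ K, g =ᶠ[𝓝 x] f := by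
  have hU : IsOpen {x | ContDiffAt ℝ m f x} :=
    isOpen_iff_mem_nhds.2 fun x (hx : ContDiffAt ℝ m f x) => hx.eventually (by simp)
  obtain ⟨T, hT, hKT, hTU⟩ := exists_compact_between hK hU hf
  obtain ⟨ψ, hψ1, hψ0, -⟩ := exists_contMDiffMap_one_nhds_of_subset_interior
    (n := m) 𝓘(ℝ, E) hK.isClosed hKT
  refine ⟨fun x => ψ x * f x, contDiff_iff_contDiffAt.2 fun x => ?_,
    (HasCompactSupport.intro hT hψ0).mul_right, fun x hx => ?_⟩
  · by_cases hx : x ∈ T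
    · exact ψ.contMDiff.contDiff.contDiffAt.mul (hTU hx)
    · refine (contDiffAt_const (c := (0 : ℝ))).congr_of_eventuallyEq ?_
      filter_upwards [hT.isClosed.isOpen_compl.mem_nhds hx] with y hy
      rw [hψ0 y hy, zero_mul]
  · filter_upwards [hψ1.filter_mono (nhds_le_nhdsSet hx)] with y hy
    rw [hy, one_mul]

theorem det_updateRow_updateRow_smul_add_smul {ι R : Type*} [Fintype ι] [DecidableEq ι]
    [CommRing R] (M : Matrix ι ι R) {l i : ι} (hli : l ≠ i) (v : ι → R) (a c : R) :
    ((M.updateRow i v).updateRow l (a • v + c • M l)).det = c * (M.updateRow i v).det := by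
  have hrepeat : ((M.updateRow i v).updateRow l v).det = 0 :=
    Matrix.det_zero_of_row_eq hli (by simp [Matrix.updateRow_ne hli.symm])
  have hself : (M.updateRow i v).updateRow l (M l) = M.updateRow i v := by
    rw [← Matrix.updateRow_ne (b := v) (M := M) hli, Matrix.updateRow_eq_self]
  rw [Matrix.det_updateRow_add, Matrix.det_updateRow_smul, Matrix.det_updateRow_smul, hrepeat,
    hself, mul_zero, zero_add]

section WeightedCofactor

variable {n : ℕ} {Q : V n → ℝ} {w : ℝ → ℝ} {l i : Fin (n + 1)}

/-- The gradient map of `Q` with its `i`-th entry replaced by the coordinate `x_l` and its `l`-th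
entry multiplied by `w(x_l)`. Its Jacobian determinant is a weighted cofactor of the Hessian: the
derivative of `w` contributes only a multiple of the `i`-th row. -/
def cofactorMap (Q : V n → ℝ) (w : ℝ → ℝ) (l i : Fin (n + 1)) : Fin (n + 1) → V n → ℝ :=
  Function.update (Function.update (fun b x => fderiv ℝ Q x (EuclideanSpace.single b 1)) i
    fun x => x l) l fun x => w (x l) * fderiv ℝ Q x (EuclideanSpace.single l 1)

theorem contDiff_cofactorMap (hQ : ContDiff ℝ 3 Q) (hw : ContDiff ℝ 2 w) (b : Fin (n + 1)) :
    ContDiff ℝ 2 (cofactorMap Q w l i b) := by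
  have hgrad : ∀ b, ContDiff ℝ 2 fun x => fderiv ℝ Q x (EuclideanSpace.single b 1) := fun b =>
    (hQ.fderiv_right (by norm_num)).clm_apply contDiff_const
  have hcoord : ContDiff ℝ 2 fun x : V n => x l :=
    (EuclideanSpace.proj l : V n →L[ℝ] ℝ).contDiff
  unfold cofactorMap
  rcases eq_or_ne b l with rfl | hbl
  · simpa using (hw.comp hcoord).mul (hgrad b)
  rcases eq_or_ne b i with rfl | hbi
  · simpa [hbl] using hcoord
  · simpa [hbl, hbi] using hgrad b

theorem jacobianMatrix_cofactorMap (hQ : ContDiff ℝ 2 Q) (hw : ContDiff ℝ 1 w) (x : V n) :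
    jacobianMatrix (cofactorMap Q w l i) x = ((hessM n Q x).updateRow i (Pi.single l 1)).updateRow l
      ((deriv w (x l) * fderiv ℝ Q x (EuclideanSpace.single l 1)) • Pi.single l 1 +
        w (x l) • hessM n Q x l) := by
  have hgrad : ∀ b, HasFDerivAt (fun y => fderiv ℝ Q y (EuclideanSpace.single b 1))
      (fderiv ℝ (fderiv ℝ Q) x (EuclideanSpace.single b 1)) x := fun b => by
    have hfd := ((hQ.fderiv_right (m := 1) le_rfl).differentiable one_ne_zero x).hasFDerivAt
    refine (hfd.clm_apply (hasFDerivAt_const (EuclideanSpace.single b (1 : ℝ)) x)).congr_fderiv ?_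
    ext v
    simpa using (hQ.contDiffAt.isSymmSndFDerivAt (x := x) (by simp)) v _
  have hcoord : HasFDerivAt (fun y : V n => y l) (EuclideanSpace.proj l : V n →L[ℝ] ℝ) x :=
    (EuclideanSpace.proj l : V n →L[ℝ] ℝ).hasFDerivAt
  have hweight : HasFDerivAt (fun y : V n => w (y l))
      (deriv w (x l) • (EuclideanSpace.proj l : V n →L[ℝ] ℝ)) x :=
    (hw.differentiable one_ne_zero _).hasDerivAt.comp_hasFDerivAt x hcoord
  ext b c
  unfold jacobianMatrix cofactorMap
  rcases eq_or_ne b l with rfl | hbl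
  · simp [(hweight.fun_mul (hgrad b)).fderiv, hessM, Pi.single_apply, eq_comm, mul_comm, add_comm]
  rcases eq_or_ne b i with rfl | hbi
  · simp [hbl, hcoord.fderiv, Pi.single_apply, eq_comm]
  · simp [hbl, hbi, (hgrad b).fderiv, hessM]

theorem det_jacobianMatrix_cofactorMap (hQ : ContDiff ℝ 2 Q) (hw : ContDiff ℝ 1 w) (hli : l ≠ i)
    (x : V n) :
    (jacobianMatrix (cofactorMap Q w l i) x).det = w (x l) * (hessM n Q x).adjugate l i := by
  rw [jacobianMatrix_cofactorMap hQ hw, det_updateRow_updateRow_smul_add_smul _ hli,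
    Matrix.adjugate_apply]

theorem setIntegral_mul_adjugate_hessM_eq_zero (hQ : ContDiff ℝ 3 Q) (hQc : HasCompactSupport Q)
    (hw : ContDiff ℝ 2 w) (hli : l ≠ i) {K : Set (V n)} (hK : volume (frontier K) = 0)
    (hbdry : ∀ x ∈ frontier K, w (x l) * fderiv ℝ Q x (EuclideanSpace.single l 1) = 0) :
    ∫ x in K, w (x l) * (hessM n Q x).adjugate l i = 0 := by
  have hrow : cofactorMap Q w l i l =
      fun x => w (x l) * fderiv ℝ Q x (EuclideanSpace.single l 1) := Function.update_self ..
  simp_rw [← det_jacobianMatrix_cofactorMap (hQ.of_le (by norm_num)) (hw.of_le (by norm_num)) hli]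
  refine setIntegral_det_jacobianMatrix_eq_zero (contDiff_cofactorMap hQ hw) (l := l) ?_ hK ?_
  · rw [hrow]
    exact (hQc.fderiv_apply ℝ _).mul_left
  · rwa [hrow]

end WeightedCofactor

theorem continuous_matrix_charpoly_coeff {ι R : Type*} [Fintype ι] [DecidableEq ι] [CommRing R]
    [TopologicalSpace R] [IsTopologicalSemiring R] (j : ℕ) :
    Continuous fun M : Matrix ι ι R => M.charpoly.coeff j := by
  have huniv : (fun M : Matrix ι ι R => M.charpoly.coeff j) = fun M =>
      MvPolynomial.eval (fun q : ι × ι => M q.1 q.2) ((Matrix.charpoly.univ R ι).coeff j) :=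
    funext fun M =>
      (Matrix.charpoly.univ_coeff_eval₂Hom ι (RingHom.id R) (fun q => M q.1 q.2) j).symm
  rw [huniv]
  exact (MvPolynomial.continuous_eval _).comp
    (continuous_pi fun q => continuous_id.matrix_elem q.1 q.2)

theorem eq_zero_of_sum_mul_pow_eq_zero {m : ℕ} {a : ℕ → ℝ}
    (h : ∀ t : ℝ, ∑ j ∈ Finset.range (m + 1), a j * t ^ (m - j) = 0) {k : ℕ}
    (hk : k ≤ m) : a k = 0 := by
  let p : Polynomial ℝ := ∑ j ∈ Finset.range (m + 1), Polynomial.monomial (m - j) (a j)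
  have hp : p = 0 := Polynomial.funext fun t => by
    simpa [p, Polynomial.eval_finsetSum] using h t
  have hcoeff : p.coeff (m - k) = a k := by
    simp only [p, Polynomial.finsetSum_coeff, Polynomial.coeff_monomial]
    rw [Finset.sum_eq_single_of_mem k (Finset.mem_range_succ_iff.2 hk) fun j hj hjk => ?_,
      if_pos rfl]
    have := Finset.mem_range_succ_iff.1 hj
    exact if_neg (by omega)
  rw [← hcoeff, hp, Polynomial.coeff_zero]

section CapillaryIntegral

variable {n : ℕ} {θ : ℝ} {F : V n → ℝ}

theorem integrableOn_coneCap_mul (hθ : 0 < cos θ) {w : ℝ → ℝ} (hw : Continuous w) {a b : ℝ}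
    (ha : 0 < a) (hw0 : ∀ y ∉ Icc a b, w y = 0) {f : V n → ℝ} (hf : ContinuousOn f (coneCap n θ)) :
    IntegrableOn (fun x => w (x (Fin.last n)) * f x) (coneCap n θ) := by
  have hcompact := isCompact_coneCap_inter_last_mem_Icc (n := n) (b := b) hθ ha
  have hcont : ContinuousOn (fun x : V n => w (x (Fin.last n)) * f x) (coneCap n θ) :=
    (hw.comp (by fun_prop)).continuousOn.mul hf
  refine ((hcont.mono inter_subset_left).integrableOn_compact hcompact).of_forall_sdiff_eq_zero
    measurableSet_coneCap fun x hx => ?_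
  rw [hw0 _ fun hxl => hx.2 ⟨hx.1, hxl⟩, zero_mul]

namespace IsCapillaryHom

theorem continuousOn_adjugate_hessM (hF : IsCapillaryHom n θ F) (i j : Fin (n + 1)) :
    ContinuousOn (fun x => (hessM n F x).adjugate i j) (coneCap n θ) :=
  (continuous_id.matrix_adjugate.matrix_elem i j).comp_continuousOn hF.continuousOn_hessM

theorem continuousOn_sigmaElem (hF : IsCapillaryHom n θ F) (j : ℕ) :
    ContinuousOn (sigmaElem n j F) (coneCap n θ) :=
  continuousOn_const.mul ((continuous_matrix_charpoly_coeff _).comp_continuousOn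
    hF.continuousOn_hessM)

theorem setIntegral_coneCap_mul_adjugate_hessM_eq_zero (hF : IsCapillaryHom n θ F)
    (hθ : 0 < cos θ) (hθ1 : cos θ < 1) {w : ℝ → ℝ} (hw : ContDiff ℝ 2 w) {a b : ℝ} (ha : 0 < a)
    (hw0 : ∀ y ∉ Icc a b, w y = 0) {i : Fin (n + 1)} (hi : Fin.last n ≠ i) :
    ∫ x in coneCap n θ, w (x (Fin.last n)) * (hessM n F x).adjugate (Fin.last n) i = 0 := by
  have hcompact := isCompact_coneCap_inter_last_mem_Icc (n := n) (b := b) hθ ha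
  obtain ⟨Q, hQ, hQc, hQF⟩ := exists_contDiff_hasCompactSupport_eventuallyEq (m := 3) hcompact
    fun x hx => hF.contDiffAt x hx.1
  have hfrontier : ∀ x ∈ frontier (coneCap n θ),
      w (x (Fin.last n)) * fderiv ℝ Q x (EuclideanSpace.single (Fin.last n) 1) = 0 := by
    intro x hx
    by_cases hxl : x (Fin.last n) ∈ Icc a b
    · have hxeq := cos_mul_norm_eq_of_mem_frontier_coneCap hx
      have hx0 : x ≠ 0 := by
        rintro rfl
        exact ha.not_ge hxl.1
      have hxK : x ∈ coneCap n θ := mem_coneCap_iff.2 ⟨hx0, hxeq.le⟩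
      have hzero := hF.fderiv_Etop_eq_zero hθ hθ1 hxK hxeq
      rw [(hQF x ⟨hxK, hxl⟩).fderiv_eq, ← Etop, hzero, mul_zero]
    · rw [hw0 _ hxl, zero_mul]
  rw [← setIntegral_mul_adjugate_hessM_eq_zero hQ hQc hw hi
    ((convex_coneCap hθ).addHaar_frontier volume) hfrontier]
  refine setIntegral_congr_fun measurableSet_coneCap fun x hx => ?_
  by_cases hxl : x (Fin.last n) ∈ Icc a b
  · have hhess : hessM n Q x = hessM n F x := by
      ext c d
      rw [hessM, hessM, (hQF x ⟨hx, hxl⟩).fderiv.fderiv_eq]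
    simp only [hhess]
  · simp only [hw0 _ hxl, zero_mul]

theorem setIntegral_toSphere_inv_mul_adjugate_hessM_eq_zero (hF : IsCapillaryHom n θ F)
    (hθ : 0 < cos θ) (hθ1 : cos θ < 1) {i : Fin (n + 1)} (hi : Fin.last n ≠ i) :
    ∫ u : sphere (0 : V n) 1 in (↑) ⁻¹' coneCap n θ, ((u : V n) (Fin.last n))⁻¹ *
      (hessM n F u).adjugate (Fin.last n) i ∂(volume : Measure (V n)).toSphere = 0 := by
  let w : ContDiffBump (3 / 2 : ℝ) := ⟨1 / 4, 1 / 2, by norm_num, by norm_num⟩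
  have hw0 : ∀ y ∉ Icc (1 : ℝ) 2, w y = 0 := fun y hy => w.zero_of_le_dist <| by
    contrapose! hy
    obtain ⟨hlow, hupp⟩ := abs_lt.1 hy
    constructor <;> norm_num [w] at hlow hupp ⊢ <;> linarith
  have hwpos : 0 < ∫ y in Ioi (0 : ℝ), w y := by
    rw [setIntegral_eq_integral_of_forall_compl_eq_zero fun y (hy : y ∉ Ioi 0) =>
      hw0 y fun hy' => hy (zero_lt_one.trans_le hy'.1)]
    exact w.integral_pos
  have hdeg : IsPosHomogeneousOn (-(Module.finrank ℝ (V n) - 1 : ℕ))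
      (fun x => (hessM n F x).adjugate (Fin.last n) i) (coneCap n θ) := by
    simpa using hF.adjugate_hessM_homogeneous hθ hθ1 (Fin.last n) i
  have hpolar := setIntegral_mul_eq_integral_Ioi_mul_setIntegral_toSphere volume
    (φ := EuclideanSpace.proj (Fin.last n)) measurableSet_coneCap
    (fun r hr x => smul_mem_coneCap_iff hr) hdeg (fun x => last_pos_of_mem_coneCap hθ)
    (integrableOn_coneCap_mul hθ w.continuous one_pos hw0 (hF.continuousOn_adjugate_hessM _ _))
  have hcone := hF.setIntegral_coneCap_mul_adjugate_hessM_eq_zero hθ hθ1 w.contDiff one_pos hw0 hi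
  exact (mul_eq_zero.1 (hpolar.symm.trans hcone)).resolve_left hwpos.ne'

theorem smul_adjugate_hessM_add_smul_capSupport (hF : IsCapillaryHom n θ F) (hθ : 0 < cos θ)
    (hθ1 : cos θ < 1) {u : V n} (hu : u ∈ sphCap n θ) (t : ℝ) :
    t • (hessM n (F + t • capSupport n θ) u).adjugate =
      (∑ j ∈ Finset.range (n + 2), sigmaElem n j F u * t ^ (n + 1 - j)) • Matrix.vecMulVec u u := by
  obtain ⟨hu1, huK⟩ := mem_sphCap_iff.1 hu
  have hunit : (u : Fin (n + 1) → ℝ) ⬝ᵥ u = 1 := by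
    have hsq := EuclideanSpace.real_norm_sq_eq u
    simp only [hu1, one_pow] at hsq
    simp only [dotProduct, hsq, sq]
  rw [hF.hessM_add (isCapillaryHom_capSupport.const_smul t) huK, hessM_const_smul,
    hessM_capSupport hu1, smul_adjugate_add_smul_one_sub_vecMulVec hunit
      (hF.hessM_mulVec_self hθ hθ1 huK) (hF.vecMul_hessM_self hθ hθ1 huK), det_add_smul_one]
  simp only [Fintype.card_fin, sigmaElem]

theorem integrableOn_toSphere_sigmaElem_mul (hF : IsCapillaryHom n θ F) (j : ℕ)
    (i : Fin (n + 1)) : IntegrableOn (fun u : sphere (0 : V n) 1 => sigmaElem n j F u * (u : V n) i)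
      ((↑) ⁻¹' coneCap n θ) (volume : Measure (V n)).toSphere := by
  have heq : Subtype.val ⁻¹' coneCap n θ =
      {u : sphere (0 : V n) 1 | cos θ ≤ (u : V n) (Fin.last n)} := by
    ext u
    simp [mem_coneCap_iff, ne_zero_of_mem_unit_sphere u]
  have hcompact : IsCompact {u : sphere (0 : V n) 1 | cos θ ≤ (u : V n) (Fin.last n)} :=
    (isClosed_le (by fun_prop) (by fun_prop)).isCompact
  refine ContinuousOn.integrableOn_compact (heq ▸ hcompact) (ContinuousOn.mul ?_ (by fun_prop))
  exact (hF.continuousOn_sigmaElem j).comp continuous_subtype_val.continuousOn fun _ hu => hu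

theorem setIntegral_toSphere_sigmaElem_mul_eq_zero (hF : IsCapillaryHom n θ F)
    (hθ : 0 < cos θ) (hθ1 : cos θ < 1) {k : ℕ} (hk : k ≤ n + 1) {i : Fin (n + 1)}
    (hi : Fin.last n ≠ i) : ∫ u : sphere (0 : V n) 1 in (↑) ⁻¹' coneCap n θ,
      sigmaElem n k F u * (u : V n) i ∂(volume : Measure (V n)).toSphere = 0 := by
  refine eq_zero_of_sum_mul_pow_eq_zero (a := fun j => ∫ u : sphere (0 : V n) 1 in
    (↑) ⁻¹' coneCap n θ, sigmaElem n j F u * (u : V n) i ∂(volume : Measure (V n)).toSphere)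
    (fun t => ?_) hk
  have hFt := hF.add (isCapillaryHom_capSupport.const_smul t)
  simp_rw [← integral_mul_const]
  rw [← integral_finsetSum _ fun j _ => (hF.integrableOn_toSphere_sigmaElem_mul j i).mul_const _,
    ← mul_zero t, ← hFt.setIntegral_toSphere_inv_mul_adjugate_hessM_eq_zero hθ hθ1 hi,
    ← integral_const_mul]
  refine setIntegral_congr_fun (measurable_subtype_coe measurableSet_coneCap) fun u hu => ?_
  have hcof := congrFun₂ (hF.smul_adjugate_hessM_add_smul_capSupport hθ hθ1
    (mem_sphCap_iff.2 ⟨norm_eq_of_mem_sphere u, hu⟩) t) (Fin.last n) i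
  have hul : (u : V n) (Fin.last n) ≠ 0 := (last_pos_of_mem_coneCap hθ hu).ne'
  simp only [Matrix.smul_apply, smul_eq_mul, Matrix.vecMulVec_apply] at hcof
  simp only [mul_left_comm t, hcof]
  rw [mul_left_comm, inv_mul_cancel_left₀ hul, Finset.sum_mul]
  exact Finset.sum_congr rfl fun j _ => mul_right_comm ..

end IsCapillaryHom

end CapillaryIntegral

section UniformlyDistributed

variable {X : Type*} [MetricSpace X] [MeasurableSpace X]

/-- A measure is uniformly distributed if the measure of a ball depends only on its radius
(Mattila, *Geometry of Sets and Measures in Euclidean Spaces*, §3.3). Neither finiteness nor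
positivity on balls is part of the definition. -/
def IsUniformlyDistributed (μ : Measure X) : Prop :=
  ∀ x y r, μ (ball x r) = μ (ball y r)

theorem isUniformlyDistributed_of_forall_exists_isometryEquiv [OpensMeasurableSpace X]
    {μ : Measure X} (h : ∀ x y, ∃ e : X ≃ᵢ X, e x = y ∧ MeasurePreserving e μ μ) :
    IsUniformlyDistributed μ := by
  intro x y r
  obtain ⟨e, rfl, he⟩ := h x y
  rw [← e.isometry.preimage_ball, he.measure_preimage measurableSet_ball.nullMeasurableSet]

namespace IsUniformlyDistributed

variable {μ ν : Measure X}

theorem measureReal_ball_pos [CompactSpace X] [IsFiniteMeasure μ] [NeZero μ]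
    (hμ : IsUniformlyDistributed μ) (x : X) {r : ℝ} (hr : 0 < r) : 0 < μ.real (ball x r) := by
  refine ENNReal.toReal_pos (fun h0 => NeZero.ne μ ?_) (measure_ne_top μ _)
  obtain ⟨t, -, ht, hcover⟩ := finite_cover_balls_of_compact (isCompact_univ (X := X)) hr
  rw [← Measure.measure_univ_eq_zero]
  exact measure_mono_null hcover
    ((measure_biUnion_null_iff ht.countable).2 fun y _ => (hμ y x r).trans h0)

variable [CompactSpace X] [BorelSpace X] [IsFiniteMeasure μ] [IsFiniteMeasure ν]

theorem setIntegral_prod_dist_lt_fst (hν : IsUniformlyDistributed ν) (x₀ : X) (r : ℝ) {f : X → ℝ}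
    (hf : Continuous f) :
    ∫ z in {z : X × X | dist z.1 z.2 < r}, f z.1 ∂μ.prod ν =
      ν.real (ball x₀ r) * ∫ x, f x ∂μ := by
  have hmeas : MeasurableSet {z : X × X | dist z.1 z.2 < r} :=
    (isOpen_lt (by fun_prop) continuous_const).measurableSet
  have hint : Integrable (fun z : X × X => f z.1) (μ.prod ν) :=
    (hf.integrable_of_hasCompactSupport (.of_compactSpace f)).comp_fst ν
  rw [← integral_indicator hmeas, integral_prod _ (hint.indicator hmeas), ← integral_const_mul]
  refine integral_congr_ae (.of_forall fun x => ?_)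
  calc ∫ y, {z : X × X | dist z.1 z.2 < r}.indicator (fun z => f z.1) (x, y) ∂ν
      = ∫ _ in ball x r, f x ∂ν := by
        rw [← integral_indicator measurableSet_ball]
        simp only [indicator, mem_ball', mem_ofPred_eq]
    _ = ν.real (ball x₀ r) * f x := by
        rw [setIntegral_const, smul_eq_mul, measureReal_def, hν x x₀, measureReal_def]

theorem setIntegral_prod_dist_lt_snd (hμ : IsUniformlyDistributed μ) (x₀ : X) (r : ℝ) {f : X → ℝ}
    (hf : Continuous f) :
    ∫ z in {z : X × X | dist z.1 z.2 < r}, f z.2 ∂μ.prod ν =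
      μ.real (ball x₀ r) * ∫ y, f y ∂ν := by
  rw [← hμ.setIntegral_prod_dist_lt_fst x₀ r hf,
    ← Measure.measurePreserving_swap.setIntegral_preimage_emb
      MeasurableEquiv.prodComm.measurableEmbedding]
  simp only [preimage_ofPred_eq, Prod.fst_swap, Prod.snd_swap, dist_comm]

theorem measureReal_prod_dist_lt (hν : IsUniformlyDistributed ν) (x₀ : X) (r : ℝ) :
    (μ.prod ν).real {z : X × X | dist z.1 z.2 < r} = ν.real (ball x₀ r) * μ.real univ := by
  simpa using hν.setIntegral_prod_dist_lt_fst (μ := μ) x₀ r (continuous_const (y := (1 : ℝ)))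

theorem measureReal_ball_mul_measureReal_univ (hμ : IsUniformlyDistributed μ)
    (hν : IsUniformlyDistributed ν) (x₀ : X) (r : ℝ) :
    μ.real (ball x₀ r) * ν.real univ = ν.real (ball x₀ r) * μ.real univ := by
  rw [← hν.measureReal_prod_dist_lt]
  simpa using (hμ.setIntegral_prod_dist_lt_snd (ν := ν) x₀ r (continuous_const (y := (1 : ℝ)))).symm

theorem abs_sub_le_of_forall_dist_lt (hμ : IsUniformlyDistributed μ)
    (hν : IsUniformlyDistributed ν) (x₀ : X) {r ε : ℝ} {f : X → ℝ} (hf : Continuous f)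
    (hfr : ∀ x y, dist x y < r → |f x - f y| ≤ ε) :
    |ν.real (ball x₀ r) * ∫ x, f x ∂μ - μ.real (ball x₀ r) * ∫ y, f y ∂ν| ≤
      ε * (ν.real (ball x₀ r) * μ.real univ) := by
  have hint (ρ : Measure X) [IsFiniteMeasure ρ] : Integrable f ρ :=
    hf.integrable_of_hasCompactSupport (.of_compactSpace f)
  rw [← hν.setIntegral_prod_dist_lt_fst x₀ r hf, ← hμ.setIntegral_prod_dist_lt_snd x₀ r hf,
    ← integral_sub ((hint μ).comp_fst ν).integrableOn ((hint ν).comp_snd μ).integrableOn,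
    ← hν.measureReal_prod_dist_lt]
  exact norm_setIntegral_le_of_norm_le_const (f := fun z : X × X => f z.1 - f z.2)
    (measure_lt_top _ _) fun z hz => hfr z.1 z.2 hz

theorem measureReal_univ_mul_integral_eq (hμ : IsUniformlyDistributed μ)
    (hν : IsUniformlyDistributed ν) {f : X → ℝ} (hf : Continuous f) :
    ν.real univ * ∫ x, f x ∂μ = μ.real univ * ∫ x, f x ∂ν := by
  obtain rfl | _ := eq_zero_or_neZero μ
  · simp
  obtain rfl | _ := eq_zero_or_neZero ν
  · simp
  obtain ⟨x₀⟩ := μ.nonempty_of_neZero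
  have hμpos : 0 < μ.real univ := measureReal_univ_pos
  have hνpos : 0 < ν.real univ := measureReal_univ_pos
  refine eq_of_abs_sub_nonpos (le_of_forall_gt_imp_ge_of_dense fun δ hδ => ?_)
  obtain ⟨r, hr, hfr⟩ := Metric.uniformContinuous_iff.1
    (CompactSpace.uniformContinuous_of_continuous hf) (δ / (ν.real univ * μ.real univ))
    (by positivity)
  have hball := hν.measureReal_ball_pos x₀ hr
  have hbound := hμ.abs_sub_le_of_forall_dist_lt hν x₀ hf fun x y hxy => (hfr hxy).le
  have hscale : ν.real (ball x₀ r) * (ν.real univ * ∫ x, f x ∂μ - μ.real univ * ∫ x, f x ∂ν) =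
      ν.real univ * (ν.real (ball x₀ r) * ∫ x, f x ∂μ - μ.real (ball x₀ r) * ∫ x, f x ∂ν) := by
    linear_combination
      (∫ x, f x ∂ν) * hμ.measureReal_ball_mul_measureReal_univ hν x₀ r
  refine le_of_mul_le_mul_left ?_ hball
  calc ν.real (ball x₀ r) * |ν.real univ * ∫ x, f x ∂μ - μ.real univ * ∫ x, f x ∂ν|
      = ν.real univ *
          |ν.real (ball x₀ r) * ∫ x, f x ∂μ - μ.real (ball x₀ r) * ∫ x, f x ∂ν| := by
        rw [← abs_of_nonneg hball.le, ← abs_mul, abs_of_nonneg hball.le, hscale, abs_mul,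
          abs_of_nonneg measureReal_nonneg]
    _ ≤ ν.real univ * (δ / (ν.real univ * μ.real univ) *
          (ν.real (ball x₀ r) * μ.real univ)) := by gcongr
    _ = ν.real (ball x₀ r) * δ := by field_simp

/-- Christensen's theorem. -/
theorem measure_univ_smul_eq (hμ : IsUniformlyDistributed μ) (hν : IsUniformlyDistributed ν) :
    ν univ • μ = μ univ • ν := by
  have := Measure.smul_finite μ (measure_ne_top ν univ)
  have := Measure.smul_finite ν (measure_ne_top μ univ)
  refine ext_of_forall_integral_eq_of_IsFiniteMeasure fun f => ?_
  simpa only [integral_smul_measure, smul_eq_mul, measureReal_def] using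
    hμ.measureReal_univ_mul_integral_eq hν f.continuous

end IsUniformlyDistributed

end UniformlyDistributed

section Sphere

variable {E : Type*} [NormedAddCommGroup E] [InnerProductSpace ℝ E]

/-- The isometry of the unit sphere induced by a linear isometry of the ambient space. -/
def sphereIsometryEquiv (e : E ≃ₗᵢ[ℝ] E) : sphere (0 : E) 1 ≃ᵢ sphere (0 : E) 1 where
  toEquiv := e.toEquiv.subtypeEquiv fun x => by simp
  isometry_toFun x y := e.isometry x y

theorem exists_sphereIsometryEquiv_apply_eq (x y : sphere (0 : E) 1) :
    ∃ e : E ≃ₗᵢ[ℝ] E, sphereIsometryEquiv e x = y :=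
  ⟨Submodule.reflection (ℝ ∙ ((x : E) - y))ᗮ, Subtype.ext (Submodule.reflection_sub (by simp))⟩

variable [MeasurableSpace E] [BorelSpace E]

theorem isUniformlyDistributed_hausdorffMeasure_sphere (d : ℝ) :
    IsUniformlyDistributed (μH[d] : Measure (sphere (0 : E) 1)) :=
  isUniformlyDistributed_of_forall_exists_isometryEquiv fun x y =>
    let ⟨e, he⟩ := exists_sphereIsometryEquiv_apply_eq x y
    ⟨sphereIsometryEquiv e, he, (sphereIsometryEquiv e).measurePreserving_hausdorffMeasure d⟩

open scoped Pointwise in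
theorem measurePreserving_sphereIsometryEquiv_toSphere {μ : Measure E} {e : E ≃ₗᵢ[ℝ] E}
    (he : MeasurePreserving e μ μ) :
    MeasurePreserving (sphereIsometryEquiv e) μ.toSphere μ.toSphere := by
  have hmeas := (sphereIsometryEquiv e).continuous.measurable
  refine ⟨hmeas, Measure.ext fun s hs => ?_⟩
  have hcone : e '' (Ioo (0 : ℝ) 1 • ((↑) '' (sphereIsometryEquiv e ⁻¹' s))) =
      Ioo (0 : ℝ) 1 • ((↑) '' s) := by
    have hcomm : e ∘ Subtype.val = Subtype.val ∘ sphereIsometryEquiv e := rfl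
    rw [← image2_smul, image_image2_distrib_right fun a x => map_smul e a x, image2_smul,
      ← image_comp, hcomm, image_comp, image_preimage_eq _ (sphereIsometryEquiv e).surjective]
  rw [Measure.map_apply hmeas hs, Measure.toSphere_apply' _ hs,
    Measure.toSphere_apply' _ (hmeas hs), ← hcone,
    ← he.measure_preimage_emb e.toHomeomorph.measurableEmbedding (e '' _),
    preimage_image_eq _ e.injective]

variable [FiniteDimensional ℝ E]

theorem isUniformlyDistributed_toSphere :
    IsUniformlyDistributed (volume : Measure E).toSphere :=
  isUniformlyDistributed_of_forall_exists_isometryEquiv fun x y =>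
    let ⟨e, he⟩ := exists_sphereIsometryEquiv_apply_eq x y
    ⟨sphereIsometryEquiv e, he, measurePreserving_sphereIsometryEquiv_toSphere e.measurePreserving⟩

theorem isFiniteMeasure_hausdorffMeasure_sphere {n : ℕ} (hn : Module.finrank ℝ E = n + 1) :
    IsFiniteMeasure (μH[n] : Measure (sphere (0 : E) 1)) := by
  suffices IsLocallyFiniteMeasure (μH[n] : Measure (sphere (0 : E) 1)) from inferInstance
  refine ⟨fun x => ?_⟩
  obtain ⟨v, rfl⟩ : ∃ v, x = -v := ⟨-x, (neg_neg x).symm⟩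
  have : Fact (Module.finrank ℝ E = n + 1) := ⟨hn⟩
  let φ := stereographic (norm_eq_of_mem_sphere v)
  obtain ⟨K, hK⟩ := ((contDiff_stereoInvFunAux (v := (v : E)) (m := 1)).comp
    (ℝ ∙ (v : E))ᗮ.subtypeL.contDiff).contDiffOn.exists_lipschitzOnWith one_ne_zero
    (convex_closedBall 0 1) (isCompact_closedBall 0 1)
  have hlip : LipschitzOnWith K φ.symm (closedBall 0 1) := fun y hy z hz => hK hy hz
  refine ⟨φ.symm '' closedBall 0 1, ?_, ?_⟩
  · have hsource : -v ∈ φ.source := by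
      simpa [φ, Subtype.ext_iff] using (ne_neg_of_mem_unit_sphere ℝ v).symm
    have hleft := φ.left_inv hsource
    rw [stereographic_apply_neg] at hleft
    have hnhds := (isOpenEmbedding_stereographic_symm (norm_eq_of_mem_sphere v)).isOpenMap
      |>.image_mem_nhds (closedBall_mem_nhds 0 one_pos)
    rwa [hleft] at hnhds
  · have hrank : Module.finrank ℝ (ℝ ∙ (v : E))ᗮ = n :=
      Submodule.finrank_orthogonal_span_singleton (ne_zero_of_mem_unit_sphere v)
    refine (hlip.hausdorffMeasure_image_le n.cast_nonneg).trans_lt ?_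
    rw [← hrank]
    exact ENNReal.mul_lt_top (by simp) (isCompact_closedBall _ _).measure_lt_top

theorem exists_hausdorffMeasure_sphere_eq_smul_toSphere {n : ℕ}
    (hn : Module.finrank ℝ E = n + 1) : ∃ c : ENNReal,
      (μH[n] : Measure (sphere (0 : E) 1)) = c • (volume : Measure E).toSphere := by
  have := isFiniteMeasure_hausdorffMeasure_sphere hn
  have : Nontrivial E := Module.nontrivial_of_finrank_pos (R := ℝ) (hn ▸ n.succ_pos)
  set ν : Measure (sphere (0 : E) 1) := (volume : Measure E).toSphere
  have hν0 : ν univ ≠ 0 := Measure.measure_univ_ne_zero.2 (Measure.toSphere_ne_zero _)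
  refine ⟨(ν univ)⁻¹ * (μH[n] : Measure (sphere (0 : E) 1)) univ, ?_⟩
  rw [mul_smul, ← (isUniformlyDistributed_hausdorffMeasure_sphere n).measure_univ_smul_eq
    isUniformlyDistributed_toSphere, smul_smul, ENNReal.inv_mul_cancel hν0 (measure_ne_top _ _),
    one_smul]

end Sphere

theorem exists_setIntegral_capCap_eq_mul (n : ℕ) (θ : ℝ) : ∃ c : ℝ, ∀ f : V n → ℝ,
    ∫ ζ in capCap n θ, f (ζ + cos θ • Etop n) ∂μH[n] =
      c * ∫ u : sphere (0 : V n) 1 in (↑) ⁻¹' coneCap n θ, f u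
        ∂(volume : Measure (V n)).toSphere := by
  obtain ⟨c, hc⟩ := exists_hausdorffMeasure_sphere_eq_smul_toSphere (E := V n) (n := n) (by simp)
  refine ⟨c.toReal, fun f => ?_⟩
  let e : V n ≃ᵢ V n := IsometryEquiv.addRight (cos θ • Etop n)
  have hpre : capCap n θ = e ⁻¹' sphCap n θ := by
    ext ζ
    simp [capCap, sphCap, e, Etop, and_comm]
  have hcone : ((↑) ⁻¹' coneCap n θ : Set (sphere (0 : V n) 1)) = (↑) ⁻¹' sphCap n θ := by
    ext u
    simp [mem_sphCap_iff]
  have hrange : sphCap n θ ⊆ range ((↑) : sphere (0 : V n) 1 → V n) := fun u hu =>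
    ⟨⟨u, mem_sphere_zero_iff_norm.2 hu.1⟩, rfl⟩
  have hemb : MeasurableEmbedding ((↑) : sphere (0 : V n) 1 → V n) :=
    MeasurableEmbedding.subtype_coe isClosed_sphere.measurableSet
  calc ∫ ζ in capCap n θ, f (ζ + cos θ • Etop n) ∂μH[n]
      = ∫ u in sphCap n θ, f u ∂μH[n] := by
        rw [hpre]
        exact (e.measurePreserving_hausdorffMeasure n).setIntegral_preimage_emb
          e.toHomeomorph.measurableEmbedding f _
    _ = ∫ u : sphere (0 : V n) 1 in (↑) ⁻¹' coneCap n θ, f u ∂μH[n] := by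
        rw [hcone, ← hemb.setIntegral_map, isometry_subtype_coe.map_hausdorffMeasure
          (.inl n.cast_nonneg), Measure.restrict_restrict_of_subset hrange]
    _ = _ := by rw [hc, Measure.restrict_smul, integral_smul_measure, smul_eq_mul]

theorem capillary_sigmaK_orthogonality_general (n k : ℕ) (θ : ℝ) (hθ : θ ∈ Ioo 0 (π / 2))
    (hkn : k ≤ n) (s G : V n → ℝ) (hs : IsHomExt n θ 3 s G) (hcap : IsCapillaryF n θ G) :
    ∀ i : Fin (n + 1), i ≠ Fin.last n →
      ∫ ζ in capCap n θ,
        sigmaElem n k G (ζ + Real.cos θ • Etop n) * ζ i ∂μH[(n : ℝ)] = 0 := by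
  intro i hi
  have hcos : 0 < cos θ := cos_pos_of_mem_Ioo ⟨by linarith [hθ.1, pi_pos], hθ.2⟩
  have hcos1 : cos θ < 1 :=
    cos_zero ▸ cos_lt_cos_of_nonneg_of_le_pi_div_two le_rfl hθ.2.le hθ.1
  obtain ⟨c, hc⟩ := exists_setIntegral_capCap_eq_mul n θ
  have hzero := (hs.isCapillaryHom hcap).setIntegral_toSphere_sigmaElem_mul_eq_zero hcos hcos1
    (hkn.trans n.le_succ) hi.symm
  have htranslate (ζ : V n) : (ζ + cos θ • Etop n) i = ζ i := by simp [Etop, hi]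
  simpa only [htranslate, hzero, mul_zero] using hc fun u => sigmaElem n k G u * u i

end Development

/-- the horizontal components of the `σ_k` curvature measure vanish. -/
theorem capillary_sigmaK_orthogonality (n k : ℕ) (hn : 1 ≤ n) (θ : ℝ)
    (hθ : θ ∈ Ioo 0 (π / 2)) (hk : 1 ≤ k) (hkn : k ≤ n)
    (s G : V n → ℝ) (hs : IsHomExt n θ ⊤ s G) (hcap : IsCapillaryF n θ G)
    (hτ : TauPos n θ G) :
    ∀ i : Fin (n + 1), i ≠ Fin.last n →
      ∫ ζ in capCap n θ,
        sigmaElem n k G (ζ + Real.cos θ • Etop n) * ζ i ∂μH[(n : ℝ)] = 0 :=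
  capillary_sigmaK_orthogonality_general n k θ hθ hkn s G
    ⟨hs.1.imp fun _ hU => ⟨hU.1, hU.2.1, hU.2.2.of_le (WithTop.coe_le_coe.2 le_top)⟩, hs.2⟩ hcap
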